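/- arXiv:2403.14375 — 5 statements merged into one kernel-verified Lean document; each statement's English description precedes it below -/
import Mathlib

section
/- Let p be a prime number. Then there exist integers a and b with a² − a·b + b² = p if and only if p = 3 or p ≡ 1 (mod 6). -/
theorem eis_forward (p : ℕ) (hp : p.Prime) (a b : ℤ)
    (h : a ^ 2 - a * b + b ^ 2 = (p : ℤ)) : p = 3 ∨ p % 6 = 1 := by
  have h3 : (p : ℤ) % 3 ≠ 2 := by
    rw [← h]
    have ha : a % 3 = 0 ∨ a % 3 = 1 ∨ a % 3 = 2 := by omega
    have hb : b % 3 = 0 ∨ b % 3 = 1 ∨ b % 3 = 2 := by omega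
    rcases ha with ha | ha | ha <;> rcases hb with hb | hb | hb <;>
      simp [pow_two, Int.add_emod, Int.sub_emod, Int.mul_emod, ha, hb]
  have h2 : p = 2 ∨ p % 2 = 1 := hp.eq_two_or_odd
  by_cases hd : 3 ∣ p
  · left
    exact ((Nat.prime_dvd_prime_iff_eq Nat.prime_three hp).1 hd).symm
  · right
    omega

theorem eis_root (p : ℕ) [Fact p.Prime] (h : p % 6 = 1) :
    ∃ w : ZMod p, w ^ 2 + w + 1 = 0 := by
  have : Fact (Nat.Prime 3) := ⟨Nat.prime_three⟩
  have hd : 3 ∣ Fintype.card (ZMod p)ˣ := by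
    rw [ZMod.card_units p]; omega
  obtain ⟨u, hu⟩ := exists_prime_orderOf_dvd_card 3 hd
  refine ⟨u, ?_⟩
  have h1 : (u : ZMod p) ^ 3 = 1 := by
    have := pow_orderOf_eq_one u
    rw [hu] at this
    rw [← Units.val_pow_eq_pow_val, this, Units.val_one]
  have h2 : (u : ZMod p) - 1 ≠ 0 := by
    intro h0
    have : u = 1 := Units.ext (by simpa using sub_eq_zero.1 h0)
    rw [this] at hu
    simp at hu
  apply mul_left_cancel₀ h2
  linear_combination h1

theorem eis_thue (p : ℕ) (hp : p.Prime) (w : ZMod p) :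
    ∃ a b : ℤ, (a ≠ 0 ∨ b ≠ 0) ∧ a ^ 2 < p ∧ b ^ 2 < p ∧ (a : ZMod p) = w * b := by
  have : Fact p.Prime := ⟨hp⟩
  set s := Nat.sqrt p with hs
  have hs1 : p < (s + 1) * (s + 1) := Nat.lt_succ_sqrt p
  have hs2 : s * s ≤ p := Nat.sqrt_le p
  have hs3 : s * s ≠ p := by
    intro h
    have h1 : ¬ Nat.Prime (s * s) := by
      rw [Nat.prime_mul_iff]
      rintro (⟨h1, h2⟩ | ⟨h1, h2⟩) <;> exact h1.ne_one h2
    exact h1 (by rw [h]; exact hp)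
  have hcard : (Finset.univ : Finset (ZMod p)).card <
      (Finset.range (s + 1) ×ˢ Finset.range (s + 1)).card := by
    simpa [ZMod.card] using hs1
  obtain ⟨x, hx, y, hy, hne, he⟩ := Finset.exists_ne_map_eq_of_card_lt_of_maps_to hcard
    (f := fun x : ℕ × ℕ => (x.1 : ZMod p) - w * x.2) (fun _ _ => Finset.mem_coe.2 (Finset.mem_univ _))
  simp only [Finset.mem_product, Finset.mem_range] at hx hy
  have hlt : ((s : ℤ)) * s < p := by exact_mod_cast lt_of_le_of_ne hs2 hs3
  have key : ∀ m n : ℕ, m < s + 1 → n < s + 1 → ((m : ℤ) - n) ^ 2 < p := by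
    intro m n hm hn
    have h1 : (m : ℤ) - n ≤ s := by omega
    have h2 : -(s : ℤ) ≤ (m : ℤ) - n := by omega
    nlinarith
  refine ⟨(x.1 : ℤ) - y.1, (x.2 : ℤ) - y.2, ?_, key _ _ hx.1 hy.1, key _ _ hx.2 hy.2, ?_⟩
  · by_contra! hc
    apply hne
    ext <;> omega
  · push_cast
    linear_combination he

theorem eis_backward (p : ℕ) (hp : p.Prime) (h : p % 6 = 1) :
    ∃ a b : ℤ, a ^ 2 - a * b + b ^ 2 = (p : ℤ) := by
  have : Fact p.Prime := ⟨hp⟩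
  obtain ⟨w, hw⟩ := eis_root p h
  obtain ⟨a, b, h0, ha, hb, hab⟩ := eis_thue p hp w
  have hd : (p : ℤ) ∣ a ^ 2 + a * b + b ^ 2 := by
    rw [← ZMod.intCast_zmod_eq_zero_iff_dvd]
    push_cast
    rw [hab]
    linear_combination (b : ZMod p) ^ 2 * hw
  obtain ⟨k, hk⟩ := hd
  have hp0 : (0 : ℤ) < p := by exact_mod_cast hp.pos
  have hpos : 0 < a ^ 2 + a * b + b ^ 2 := by
    rcases h0 with h0 | h0
    · have := sq_pos_of_ne_zero h0
      nlinarith [sq_nonneg (a + 2 * b)]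
    · have := sq_pos_of_ne_zero h0
      nlinarith [sq_nonneg (2 * a + b)]
  have hk0 : 0 < k := by
    rw [hk] at hpos
    exact pos_of_mul_pos_right hpos hp0.le
  have hk3 : k < 3 := by
    have : a ^ 2 + a * b + b ^ 2 < 3 * p := by nlinarith [sq_nonneg (a - b)]
    nlinarith
  have hk12 : k = 1 ∨ k = 2 := by omega
  rcases hk12 with rfl | rfl
  · exact ⟨a, -b, by linarith⟩
  · exfalso
    rcases Int.even_or_odd' a with ⟨c, rfl | rfl⟩ <;> rcases Int.even_or_odd' b with ⟨d, rfl | rfl⟩ <;>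
      ring_nf at hk <;> omega

theorem eisenstein_norm_prime_iff (p : ℕ) (hp : p.Prime) :
    (∃ a b : ℤ, a ^ 2 - a * b + b ^ 2 = (p : ℤ)) ↔ p = 3 ∨ p % 6 = 1 := by
  constructor
  · rintro ⟨a, b, h⟩
    exact eis_forward p hp a b h
  · rintro (rfl | h)
    · exact ⟨1, -1, by norm_num⟩
    · exact eis_backward p hp h
end

section
/- Let p be a prime number with p ≠ 3, and suppose there exist integers a and b with a² − a·b + b² = p. Then p ≡ 1 (mod 6). -/
theorem prime_mod_six_of_eisenstein_norm (p : ℕ) (hp : p.Prime) (hp3 : p ≠ 3)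
    (h : ∃ a b : ℤ, a ^ 2 - a * b + b ^ 2 = (p : ℤ)) : p % 6 = 1 := by
  obtain ⟨a, b, h⟩ := h
  have h3 : p % 3 ≠ 0 := fun h0 =>
    hp3 ((Nat.prime_dvd_prime_iff_eq Nat.prime_three hp).1 (Nat.dvd_of_mod_eq_zero h0)).symm
  have hm : (p : ℤ) % 3 ≠ 2 := by
    have e : (p : ℤ) = (a + b) * (a + b) - 3 * (a * b) := by rw [← h]; ring
    have e2 : (p : ℤ) % 3 = ((a + b) * (a + b)) % 3 := by omega
    rw [e2, Int.mul_emod]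
    have : (a + b) % 3 = 0 ∨ (a + b) % 3 = 1 ∨ (a + b) % 3 = 2 := by omega
    rcases this with h | h | h <;> rw [h] <;> norm_num
  rcases hp.eq_two_or_odd with h2 | h2 <;> omega
end

section
/- Let p be a prime number and let ω = exp(2πi/3) = −1/2 + (√3/2)·i ∈ ℂ. Then there exist integers a and b with |a + b·ω|² = p (i.e. the complex norm-squared of a + bω equals p) if and only if p = 3 or p ≡ 1 (mod 6). -/
noncomputable def omegaC : ℂ := -1/2 + (Real.sqrt 3 / 2) * Complex.I

theorem normSq_aux (a b : ℤ) :
    Complex.normSq ((a : ℂ) + (b : ℂ) * omegaC) = ((a^2 - a*b + b^2 : ℤ) : ℝ) := by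
  have h : (a : ℂ) + (b : ℂ) * omegaC
      = ((a - b/2 : ℝ) : ℂ) + ((b * Real.sqrt 3 / 2 : ℝ) : ℂ) * Complex.I := by
    unfold omegaC
    push_cast
    ring
  rw [h, Complex.normSq_add_mul_I]
  have h3 : Real.sqrt 3 ^ 2 = 3 := Real.sq_sqrt (by norm_num)
  push_cast
  linear_combination (b:ℝ)^2 / 4 * h3

theorem root_aux (p : ℕ) (hp : p.Prime) (h : p % 6 = 1) : ∃ u : ZMod p, u^2 - u + 1 = 0 := by
  haveI : Fact p.Prime := ⟨hp⟩
  haveI : Fact (Nat.Prime 3) := ⟨Nat.prime_three⟩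
  obtain ⟨v, hv⟩ := exists_prime_orderOf_dvd_card (G := (ZMod p)ˣ) 3 (by
    rw [ZMod.card_units]; omega)
  have h1 : v ≠ 1 := by
    rintro rfl
    simp at hv
  have h3 : v ^ 3 = 1 := by rw [← hv]; exact pow_orderOf_eq_one v
  have h3' : (v : ZMod p) ^ 3 = 1 := by simpa using congrArg Units.val h3
  have h1' : (v : ZMod p) - 1 ≠ 0 := by
    intro h
    apply h1
    ext
    simpa using sub_eq_zero.mp h
  refine ⟨-(v : ZMod p), ?_⟩
  apply mul_left_cancel₀ h1'
  linear_combination h3'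

theorem rep_aux (p : ℕ) (hp : p.Prime) (h : p % 6 = 1) : ∃ a b : ℤ, a^2 - a*b + b^2 = p := by
  haveI : Fact p.Prime := ⟨hp⟩
  obtain ⟨u, hu⟩ := root_aux p hp h
  set s := Nat.sqrt p with hs
  have hs1 : s * s ≤ p := Nat.sqrt_le p
  have hs2 : p < (s+1) * (s+1) := Nat.lt_succ_sqrt p
  have hs3 : s * s < p := by
    refine lt_of_le_of_ne hs1 ?_
    intro he
    have hn : s ≠ 1 := by
      intro h1
      rw [h1] at he
      exact hp.one_lt.ne he
    exact Nat.not_prime_of_mul_eq he hn hn hp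
  obtain ⟨⟨x, y⟩, ⟨z, w⟩, hne, he⟩ := Fintype.exists_ne_map_eq_of_card_lt
    (fun q : Fin (s+1) × Fin (s+1) => ((q.1 : ℕ) : ZMod p) - u * ((q.2 : ℕ) : ZMod p)) (by
      simpa [ZMod.card] using hs2)
  simp only at he
  obtain ⟨a, ha⟩ : ∃ a : ℤ, a = ((x : ℕ) : ℤ) - ((z : ℕ) : ℤ) := ⟨_, rfl⟩
  obtain ⟨b, hb⟩ : ∃ b : ℤ, b = ((y : ℕ) : ℤ) - ((w : ℕ) : ℤ) := ⟨_, rfl⟩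
  have hab : ¬ (a = 0 ∧ b = 0) := by
    rintro ⟨h1, h2⟩
    apply hne
    ext <;> simp only <;> omega
  have hx := x.2
  have hy := y.2
  have hz := z.2
  have hw := w.2
  have ha2 : a^2 ≤ (s:ℤ)^2 := sq_le_sq' (by omega) (by omega)
  have hb2 : b^2 ≤ (s:ℤ)^2 := sq_le_sq' (by omega) (by omega)
  have hs4 : (s:ℤ)^2 < p := by rw [sq]; exact_mod_cast hs3
  have hac : (a : ZMod p) = u * (b : ZMod p) := by
    rw [ha, hb]
    push_cast
    linear_combination he
  have hd : (p : ℤ) ∣ a^2 - a*b + b^2 := by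
    rw [← ZMod.intCast_zmod_eq_zero_iff_dvd]
    push_cast
    rw [hac]
    linear_combination (b : ZMod p)^2 * hu
  have hpos : 0 < a^2 - a*b + b^2 := by
    by_contra hc
    apply hab
    constructor
    · have : a^2 = 0 := by nlinarith [sq_nonneg (a - 2*b), sq_nonneg a]
      simpa using this
    · have : b^2 = 0 := by nlinarith [sq_nonneg (2*a - b), sq_nonneg b]
      simpa using this
  have hlt : a^2 - a*b + b^2 < 3 * p := by nlinarith [sq_nonneg (a + b)]
  obtain ⟨k, hk⟩ := hd
  have hp0 : (0:ℤ) < p := by exact_mod_cast hp.pos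
  have hk0 : 0 < k := by
    rw [hk] at hpos
    exact pos_of_mul_pos_right hpos hp0.le
  have hk3 : k < 3 := by nlinarith
  obtain rfl | rfl : k = 1 ∨ k = 2 := by omega
  · exact ⟨a, b, by rw [hk, mul_one]⟩
  · exfalso
    rcases Int.even_or_odd' a with ⟨c, rfl | rfl⟩ <;> rcases Int.even_or_odd' b with ⟨d, rfl | rfl⟩ <;>
      ring_nf at hk <;> omega

theorem prime_is_eisenstein_norm_iff (p : ℕ) (hp : p.Prime) :
    (∃ a b : ℤ, Complex.normSq ((a : ℂ) + (b : ℂ) * omegaC) = (p : ℝ)) ↔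
      p = 3 ∨ p % 6 = 1 := by
  constructor
  · rintro ⟨a, b, h⟩
    rw [normSq_aux] at h
    have h' : a^2 - a*b + b^2 = (p : ℤ) := by exact_mod_cast h
    have hm : (p : ℤ) % 3 ≠ 2 := by
      have e : (p : ℤ) = (a+b)^2 - 3 * (a*b) := by rw [← h']; ring
      obtain ⟨c, hc⟩ : ∃ c, a + b = c := ⟨_, rfl⟩
      rw [hc] at e
      have : c % 3 = 0 ∨ c % 3 = 1 ∨ c % 3 = 2 := by omega
      have e2 : c^2 % 3 = 0 ∨ c^2 % 3 = 1 := by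
        rcases this with h | h | h <;> simp [sq, Int.mul_emod, h]
      omega
    have h3 : p % 3 = 0 → p = 3 := fun h =>
      ((Nat.prime_dvd_prime_iff_eq Nat.prime_three hp).1 (Nat.dvd_of_mod_eq_zero h)).symm
    have h2 := hp.eq_two_or_odd
    omega
  · intro h
    have : ∃ a b : ℤ, a^2 - a*b + b^2 = p := by
      rcases h with rfl | h
      · exact ⟨1, -1, by norm_num⟩
      · exact rep_aux p hp h
    obtain ⟨a, b, h⟩ := this
    exact ⟨a, b, by rw [normSq_aux, h]; simp⟩
end

section
/- Let a/c and b/d be two distinct reduced rational numbers (a, c coprime, c > 0; b, d coprime, d > 0). Then the open disks D₁ of radius 1/(2c²) centered at a/c + i/(2c²) and D₂ of radius 1/(2d²) centered at b/d + i/(2d²) are disjoint, and their closures are tangent if and only if |a·d − b·c| = 1. -/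
theorem ford_dist_sq (a c b d : ℤ) (hc : 0 < c) (hd : 0 < d) :
    (dist ((a : ℂ) / (c : ℂ) + Complex.I / (2 * (c : ℂ) ^ 2))
      ((b : ℂ) / (d : ℂ) + Complex.I / (2 * (d : ℂ) ^ 2))) ^ 2
    = (1 / (2 * (c : ℝ) ^ 2) + 1 / (2 * (d : ℝ) ^ 2)) ^ 2
      + (((a * d - b * c : ℤ) : ℝ) ^ 2 - 1) / ((c : ℝ) ^ 2 * (d : ℝ) ^ 2) := by
  have hc' : (c : ℝ) ≠ 0 := by exact_mod_cast hc.ne'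
  have hd' : (d : ℝ) ≠ 0 := by exact_mod_cast hd.ne'
  have e : ∀ x y : ℤ, ((x : ℂ) / (y : ℂ) + Complex.I / (2 * (y : ℂ) ^ 2))
      = ⟨(x : ℝ) / y, 1 / (2 * (y : ℝ) ^ 2)⟩ := by
    intro x y
    rw [Complex.mk_eq_add_mul_I]
    push_cast
    ring
  rw [e, e, Complex.dist_eq, Complex.sq_norm, Complex.normSq_apply]
  simp only [Complex.sub_re, Complex.sub_im]
  push_cast
  field_simp
  ring



theorem ford_disks_disjoint_and_tangent_iff (a c b d : ℤ)
    (hac : IsCoprime a c) (hc : 0 < c) (hbd : IsCoprime b d) (hd : 0 < d)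
    (hne : a * d ≠ b * c) :
    Disjoint
        (Metric.ball ((a : ℂ) / (c : ℂ) + Complex.I / (2 * (c : ℂ) ^ 2))
          (1 / (2 * (c : ℝ) ^ 2)))
        (Metric.ball ((b : ℂ) / (d : ℂ) + Complex.I / (2 * (d : ℂ) ^ 2))
          (1 / (2 * (d : ℝ) ^ 2))) ∧
      ((closure (Metric.ball ((a : ℂ) / (c : ℂ) + Complex.I / (2 * (c : ℂ) ^ 2))
            (1 / (2 * (c : ℝ) ^ 2))) ∩
          closure (Metric.ball ((b : ℂ) / (d : ℂ) + Complex.I / (2 * (d : ℂ) ^ 2))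
            (1 / (2 * (d : ℝ) ^ 2)))).Nonempty ↔ |a * d - b * c| = 1) := by
  have hc' : (0 : ℝ) < c := by exact_mod_cast hc
  have hd' : (0 : ℝ) < d := by exact_mod_cast hd
  have hr : (0 : ℝ) < 1 / (2 * (c : ℝ) ^ 2) := by positivity
  have hs : (0 : ℝ) < 1 / (2 * (d : ℝ) ^ 2) := by positivity
  have hk : 1 ≤ |a * d - b * c| := Int.one_le_abs (sub_ne_zero.mpr hne)
  have hk2 : (1 : ℝ) ≤ ((a * d - b * c : ℤ) : ℝ) ^ 2 := by
    have : 1 ≤ (a * d - b * c) ^ 2 := by rw [← sq_abs]; nlinarith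
    exact_mod_cast this
  have hcd : (0 : ℝ) < (c : ℝ) ^ 2 * (d : ℝ) ^ 2 := by positivity
  have key := ford_dist_sq a c b d hc hd
  have hle : 0 ≤ (((a * d - b * c : ℤ) : ℝ) ^ 2 - 1) / ((c : ℝ) ^ 2 * (d : ℝ) ^ 2) :=
    div_nonneg (by linarith) hcd.le
  refine ⟨Metric.ball_disjoint_ball ?_, ?_⟩
  · exact abs_le_of_sq_le_sq' (by linarith) dist_nonneg |>.2
  rw [closure_ball _ hr.ne', closure_ball _ hs.ne', ← Set.not_disjoint_iff_nonempty_inter,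
    disjoint_closedBall_closedBall_iff hr.le hs.le, not_lt]
  constructor
  · intro h
    have h1 := pow_le_pow_left₀ dist_nonneg h 2
    rw [key] at h1
    have h2 : (((a * d - b * c : ℤ) : ℝ) ^ 2 - 1) / ((c : ℝ) ^ 2 * (d : ℝ) ^ 2) ≤ 0 := by linarith
    rw [div_le_iff₀ hcd, zero_mul] at h2
    have h3 : (a * d - b * c) ^ 2 ≤ 1 := by
      have : ((a * d - b * c : ℤ) : ℝ) ^ 2 ≤ 1 := by linarith
      exact_mod_cast this
    rw [← sq_abs] at h3
    nlinarith
  · intro h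
    have h2 : ((a * d - b * c : ℤ) : ℝ) ^ 2 = 1 := by
      have : (a * d - b * c) ^ 2 = 1 := by rw [← sq_abs, h]; norm_num
      exact_mod_cast this
    rw [h2, sub_self, zero_div, add_zero] at key
    exact abs_le_of_sq_le_sq' key.le (by positivity) |>.2
end

section
/- Let n > 1 be a positive integer. The number of ways of writing n = c² + d² with c, d coprime positive integers equals the number of integers k with 0 < k < n, k coprime to n, such that the vertical line {k/n + i·t : t > 0} ⊂ ℍ contains a point of the orbit of i under the action of SL(2,ℤ) on the upper half-plane by linear fractional transformations. -/
open UpperHalfPlane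

lemma aux_re (g : Matrix.SpecialLinearGroup (Fin 2) ℤ) :
    (g • UpperHalfPlane.I).re = ((g 0 0 * g 1 0 + g 0 1 * g 1 1 : ℤ) : ℝ) /
      ((g 1 0 ^ 2 + g 1 1 ^ 2 : ℤ) : ℝ) := by
  rw [← UpperHalfPlane.coe_re, UpperHalfPlane.specialLinearGroup_apply]
  simp [Complex.div_re, Complex.normSq_apply]
  rw [← add_div]
  ring_nf

lemma aux_frac (x y k n : ℤ) (hy : 0 < y) (hn : 0 < n) (h1 : IsCoprime x y) (h2 : IsCoprime k n)
    (h : (x : ℝ) / y = (k : ℝ) / n) : x = k ∧ y = n := by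
  have hy' : (y : ℝ) ≠ 0 := by exact_mod_cast hy.ne'
  have hn' : (n : ℝ) ≠ 0 := by exact_mod_cast hn.ne'
  rw [div_eq_div_iff hy' hn'] at h
  have h : x * n = k * y := by exact_mod_cast h
  have hyn : y = n := by
    apply Int.dvd_antisymm hy.le hn.le
    · exact h1.symm.dvd_of_dvd_mul_left ⟨k, by linarith⟩
    · exact h2.symm.dvd_of_dvd_mul_left ⟨x, by linarith⟩
  subst hyn
  exact ⟨mul_right_cancel₀ hn.ne' h, rfl⟩

/-- necessary data from an orbit point -/
lemma aux_fwd (k n : ℤ) (hn : 0 < n) (h2 : IsCoprime k n)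
    (g : Matrix.SpecialLinearGroup (Fin 2) ℤ)
    (h : (g • UpperHalfPlane.I).re = (k : ℝ) / (n : ℝ)) :
    ∃ c d : ℤ, IsCoprime c d ∧ c ^ 2 + d ^ 2 = n ∧ n ∣ k * d - c ∧ n ∣ k * c + d := by
  rw [aux_re] at h
  have hdet := g.det_coe
  rw [Matrix.det_fin_two] at hdet
  generalize g 0 0 = a at *
  generalize g 0 1 = b at *
  generalize g 1 0 = c at *
  generalize g 1 1 = d at *
  have hpos : 0 < c ^ 2 + d ^ 2 := by
    by_contra hh
    have hc : c = 0 := by nlinarith [sq_nonneg c, sq_nonneg d]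
    have hd : d = 0 := by nlinarith [sq_nonneg c, sq_nonneg d]
    subst hc hd
    simp at hdet
  have hcop : IsCoprime (a * c + b * d) (c ^ 2 + d ^ 2) :=
    ⟨-(a * c + b * d), a ^ 2 + b ^ 2, by linear_combination (a * d - b * c + 1) * hdet⟩
  obtain ⟨h3, h4⟩ := aux_frac _ _ _ _ hpos hn hcop h2 h
  refine ⟨c, d, ⟨-b, a, by linarith⟩, h4, ⟨b, ?_⟩, ⟨a, ?_⟩⟩
  · rw [← h3, ← h4]; linear_combination c * hdet
  · rw [← h3, ← h4]; linear_combination -d * hdet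

lemma aux_bwd (k n c d : ℤ) (hn : 0 < n) (hcd : IsCoprime c d) (h : c ^ 2 + d ^ 2 = n)
    (hk : n ∣ k * d - c) : ∃ g : Matrix.SpecialLinearGroup (Fin 2) ℤ,
      (g • UpperHalfPlane.I).re = (k : ℝ) / (n : ℝ) := by
  obtain ⟨u, v, huv⟩ := hcd
  have hdn : IsCoprime n d := by
    rw [← h]
    have : IsCoprime (c ^ 2) d := (IsCoprime.pow_left ⟨u, v, huv⟩)
    obtain ⟨p, q, hpq⟩ := this
    exact ⟨p, q - p * d, by linear_combination hpq⟩
  have hdv : n ∣ (k - (v * c - u * d)) := by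
    apply hdn.dvd_of_dvd_mul_right
    obtain ⟨m, hm⟩ := hk
    refine ⟨m + u, ?_⟩
    rw [mul_add, ← hm, ← h]
    linear_combination -c * huv
  obtain ⟨t, ht⟩ := hdv
  have hdet : (!![v + t * c, -u + t * d; c, d] : Matrix (Fin 2) (Fin 2) ℤ).det = 1 := by
    rw [Matrix.det_fin_two_of]; linear_combination huv
  let g : Matrix.SpecialLinearGroup (Fin 2) ℤ := ⟨!![v + t * c, -u + t * d; c, d], hdet⟩
  have e00 : g 0 0 = v + t * c := rfl
  have e01 : g 0 1 = -u + t * d := rfl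
  have e10 : g 1 0 = c := rfl
  have e11 : g 1 1 = d := rfl
  refine ⟨g, ?_⟩
  · rw [aux_re, e00, e01, e10, e11]
    congr 2
    · rw [← h] at ht
      linear_combination -ht

lemma aux_copn (k n c d : ℤ) (hcd : IsCoprime c d) (h : c ^ 2 + d ^ 2 = n)
    (hk : n ∣ k * d - c) : IsCoprime k n := by
  have hcn : IsCoprime c n := by
    rw [← h]
    obtain ⟨p, q, hpq⟩ := (IsCoprime.pow_right hcd : IsCoprime c (d ^ 2))
    exact ⟨p - q * c, q, by linear_combination hpq⟩
  obtain ⟨m, hm⟩ := hk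
  obtain ⟨p, q, hpq⟩ := hcn
  exact ⟨p * d, q - p * m, by linear_combination hpq + p * hm⟩

theorem count_sum_two_squares_eq_count_orbit_lines (n : ℕ) (hn : 1 < n) :
    {q : ℕ × ℕ | 0 < q.1 ∧ 0 < q.2 ∧ Nat.Coprime q.1 q.2 ∧
        q.1 ^ 2 + q.2 ^ 2 = n}.ncard =
      {k : ℕ | 0 < k ∧ k < n ∧ Nat.Coprime k n ∧
        ∃ g : Matrix.SpecialLinearGroup (Fin 2) ℤ,
          (g • UpperHalfPlane.I).re = (k : ℝ) / (n : ℝ)}.ncard := by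
  have : NeZero n := ⟨by omega⟩
  have hn0 : (0 : ℤ) < n := by omega
  -- existence of k
  have hex : ∀ q : ℕ × ℕ, (0 < q.1 ∧ 0 < q.2 ∧ Nat.Coprime q.1 q.2 ∧ q.1 ^ 2 + q.2 ^ 2 = n) →
      ∃ k : ℕ, k < n ∧ (n : ℤ) ∣ k * q.2 - q.1 := by
    rintro ⟨c, d⟩ ⟨-, -, hcd, h⟩
    simp only at *
    have hdn : Nat.Coprime d n := by
      rw [← h, sq d]
      simpa using (Nat.Coprime.pow_right 2 hcd.symm)
    refine ⟨((c : ZMod n) * (d : ZMod n)⁻¹).val, ZMod.val_lt _, ?_⟩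
    rw [← ZMod.intCast_zmod_eq_zero_iff_dvd]
    push_cast
    rw [ZMod.natCast_zmod_val, mul_assoc, mul_comm (d : ZMod n)⁻¹, ZMod.coe_mul_inv_eq_one d hdn]
    simp
  choose f hf1 hf2 using hex
  refine Set.ncard_congr f ?_ ?_ ?_
  · rintro q hq
    have h1 := hf1 q hq
    have h2 := hf2 q hq
    obtain ⟨hc, hd, hcd, h⟩ := id hq
    have hcd' := Nat.isCoprime_iff_coprime.mpr hcd
    have h' : (q.1 : ℤ) ^ 2 + (q.2 : ℤ) ^ 2 = n := by exact_mod_cast h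
    have hco := Nat.isCoprime_iff_coprime.mp (aux_copn _ _ _ _ hcd' h' h2)
    refine ⟨?_, h1, hco, ?_⟩
    · rcases Nat.eq_zero_or_pos (f q hq) with h0 | h0
      · rw [h0] at hco
        simp at hco
        omega
      · exact h0
    · simpa using aux_bwd _ _ _ _ hn0 hcd' h' h2
  · rintro ⟨c, d⟩ ⟨c', d'⟩ hq hq' he
    have h2 := hf2 _ hq
    have h2' := hf2 _ hq'
    rw [← he] at h2'
    generalize f _ hq = k at *
    obtain ⟨hc, hd, hcd, h⟩ := id hq
    obtain ⟨hc', hd', hcd', h'⟩ := id hq'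
    simp only at *
    have hdv : (n : ℤ) ∣ c * d' - c' * d := by
      obtain ⟨x, hx⟩ := h2
      obtain ⟨y, hy⟩ := h2'
      exact ⟨y * d - x * d', by linear_combination d * hy - d' * hx⟩
    have hlt1 : c * d' < n := by nlinarith [sq_nonneg ((c:ℤ) - d')]
    have hlt2 : c' * d < n := by nlinarith [sq_nonneg ((c':ℤ) - d)]
    have p1 : 0 < c * d' := by positivity
    have p2 : 0 < c' * d := by positivity
    have he : (c * d' : ℤ) - c' * d = 0 := by
      apply Int.eq_zero_of_abs_lt_dvd hdv
      zify at hlt1 hlt2 p1 p2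
      rw [abs_lt]
      constructor <;> linarith
    have he : c * d' = c' * d := by
      zify; linarith
    have hcc : c = c' := by
      apply Nat.dvd_antisymm
      · exact hcd.dvd_of_dvd_mul_right ⟨d', he.symm⟩
      · exact hcd'.dvd_of_dvd_mul_right ⟨d, he⟩
    subst hcc
    have := Nat.eq_of_mul_eq_mul_left hc he
    rw [this]
  · rintro k ⟨hk0, hkn, hco, g, hg⟩
    obtain ⟨c, d, hcd, h, hd1, hd2⟩ := aux_fwd k n hn0 (Nat.isCoprime_iff_coprime.mpr hco) g
      (by simpa using hg)
    have hc0 : c ≠ 0 := by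
      rintro rfl
      have := Int.isUnit_iff.mp (isCoprime_zero_left.mp hcd)
      rcases this with rfl | rfl <;> norm_num at h <;> omega
    have hd0 : d ≠ 0 := by
      rintro rfl
      have := Int.isUnit_iff.mp (isCoprime_zero_right.mp hcd)
      rcases this with rfl | rfl <;> norm_num at h <;> omega
    -- a positive pair
    have key : ∃ c' d' : ℤ, 0 < c' ∧ 0 < d' ∧ IsCoprime c' d' ∧ c' ^ 2 + d' ^ 2 = n ∧
        (n : ℤ) ∣ k * d' - c' := by
      rcases lt_or_gt_of_ne hc0 with hc | hc <;> rcases lt_or_gt_of_ne hd0 with hd | hd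
      · refine ⟨-c, -d, by omega, by omega, hcd.neg_neg, by linarith, ?_⟩
        obtain ⟨m, hm⟩ := hd1
        exact ⟨-m, by linear_combination -hm⟩
      · refine ⟨d, -c, by omega, by omega, hcd.symm.neg_right, by linarith, ?_⟩
        obtain ⟨m, hm⟩ := hd2
        exact ⟨-m, by linear_combination -hm⟩
      · refine ⟨-d, c, by omega, by omega, hcd.symm.neg_left, by linarith, ?_⟩
        obtain ⟨m, hm⟩ := hd2
        exact ⟨m, by linear_combination hm⟩
      · exact ⟨c, d, hc, hd, hcd, h, hd1⟩
    obtain ⟨c, d, hc, hd, hcd, h, hdv⟩ := key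
    lift c to ℕ using hc.le
    lift d to ℕ using hd.le
    have hq : 0 < c ∧ 0 < d ∧ Nat.Coprime c d ∧ c ^ 2 + d ^ 2 = n :=
      ⟨by omega, by omega, Nat.isCoprime_iff_coprime.mp hcd, by exact_mod_cast h⟩
    refine ⟨(c, d), hq, ?_⟩
    have h1 := hf1 (c, d) hq
    have h2 := hf2 (c, d) hq
    generalize f (c, d) hq = k' at *
    simp only at *
    have hdn : IsCoprime (n : ℤ) d := by
      rw [← h]
      obtain ⟨p, q, hpq⟩ := (IsCoprime.pow_left hcd : IsCoprime ((c : ℤ) ^ 2) d)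
      exact ⟨p, q - p * d, by linear_combination hpq⟩
    have h3 : (n : ℤ) ∣ k' - k := by
      apply hdn.dvd_of_dvd_mul_right
      obtain ⟨x, hx⟩ := h2
      obtain ⟨y, hy⟩ := hdv
      exact ⟨x - y, by linear_combination hx - hy⟩
    have := Int.eq_zero_of_abs_lt_dvd h3 (by rw [abs_lt]; constructor <;> omega)
    omega
end
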